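/- arXiv:math/0510247 — 2 statements merged into one kernel-verified Lean document; each statement's English description precedes it below -/
import Mathlib

section
/- A commutative Noetherian local ring R with residue field k is Gorenstein in the sense that Ext^*_R(k,R) is concentrated in one degree where it equals k, if and only if R has finite injective dimension as a module over itself. -/
open CategoryTheory

universe u
namespace GorAux

open Abelian

variable {R : Type u} [CommRing R]

/-- The short complex attached to an exact pair of linear maps. -/
lemma exists_shortExact {N₁ N₂ N₃ : Type u} [AddCommGroup N₁] [Module R N₁]
    [AddCommGroup N₂] [Module R N₂] [AddCommGroup N₃] [Module R N₃]
    (f : N₁ →ₗ[R] N₂) (g : N₂ →ₗ[R] N₃)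
    (hf : Function.Injective f) (hg : Function.Surjective g) (h : Function.Exact f g) :
    (ModuleCat.shortComplexOfCompEqZero f g h.linearMap_comp_eq_zero).ShortExact :=
  ModuleCat.shortComplex_shortExact _ h hf hg

lemma subsingleton_ext_X₂ [HasExt.{u} (ModuleCat.{u} R)] {S : ShortComplex (ModuleCat.{u} R)}
    (hS : S.ShortExact) (M : ModuleCat.{u} R) (i : ℕ)
    (h₁ : Subsingleton (Ext S.X₁ M i)) (h₃ : Subsingleton (Ext S.X₃ M i)) :
    Subsingleton (Ext S.X₂ M i) := by
  refine subsingleton_of_forall_eq 0 fun x => ?_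
  obtain ⟨y, rfl⟩ := Ext.contravariant_sequence_exact₂ hS M x (Subsingleton.elim _ _)
  rw [Subsingleton.elim y 0, Ext.comp_zero]

lemma subsingleton_ext_of_iso [HasExt.{u} (ModuleCat.{u} R)] {X Y : ModuleCat.{u} R}
    (e : X ≅ Y) (M : ModuleCat.{u} R) (i : ℕ)
    (h : Subsingleton (Ext X M i)) : Subsingleton (Ext Y M i) := by
  refine subsingleton_of_forall_eq 0 fun x => ?_
  have : (Ext.mk₀ e.inv).comp ((Ext.mk₀ e.hom).comp x (zero_add i)) (zero_add i) = x := by simp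
  rw [← this, Subsingleton.elim ((Ext.mk₀ e.hom).comp x (zero_add i)) 0, Ext.comp_zero]

lemma subsingleton_ext_of_subsingleton [HasExt.{u} (ModuleCat.{u} R)] (X : ModuleCat.{u} R)
    [Subsingleton X] (M : ModuleCat.{u} R) (i : ℕ) : Subsingleton (Ext X M i) := by
  refine subsingleton_of_forall_eq 0 fun x => ?_
  rw [← x.mk₀_id_comp, (ModuleCat.isZero_of_subsingleton X).eq_zero_of_src (𝟙 X), Ext.mk₀_zero,
    Ext.zero_comp]

/-- Dévissage to prime quotients containing a given ideal. -/
lemma subsingleton_ext_of_primes [IsNoetherianRing R] [HasExt.{u} (ModuleCat.{u} R)]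
    (M : ModuleCat.{u} R) (d : ℕ) (J : Ideal R)
    (hJ : ∀ q : Ideal R, q.IsPrime → J ≤ q → ∀ i, d ≤ i →
      Subsingleton (Ext (ModuleCat.of R (R ⧸ q)) M i))
    (N : Type u) [AddCommGroup N] [Module R N] [hN : Module.Finite R N]
    (hann : ∀ x ∈ J, ∀ y : N, x • y = 0) (i : ℕ) (hi : d ≤ i) :
    Subsingleton (Ext (ModuleCat.of R N) M i) := by
  induction hN using IsNoetherianRing.induction_on_isQuotientEquivQuotientPrime R with
  | subsingleton N => exact subsingleton_ext_of_subsingleton _ _ _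
  | quotient N p e =>
    refine subsingleton_ext_of_iso e.symm.toModuleIso M i (hJ p.1 p.2 ?_ i hi)
    intro x hx
    have h := congrArg e (hann x hx (e.symm (Ideal.Quotient.mk _ 1)))
    rw [map_smul, e.apply_symm_apply, map_zero] at h
    rw [← Ideal.Quotient.eq_zero_iff_mem, ← h, Algebra.smul_def, map_one, mul_one]
    rfl
  | exact N₁ N₂ N₃ f g hf hg hfg h₁ h₃ =>
    refine subsingleton_ext_X₂ (exists_shortExact f g hf hg hfg) M i (h₁ ?_) (h₃ ?_)
    · intro x hx y
      apply hf
      rw [map_smul, hann x hx, map_zero]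
    · intro x hx y
      obtain ⟨y, rfl⟩ := hg y
      rw [← map_smul, hann x hx, map_zero]

lemma smul_eq_mk₀_comp [HasExt.{u} (ModuleCat.{u} R)] {X M : ModuleCat.{u} R} {i : ℕ} (r : R)
    (x : Ext X M i) : (Ext.mk₀ (r • 𝟙 X)).comp x (zero_add i) = r • x := by
  simp [Ext.mk₀_smul]

lemma injective_of_ext_one [HasExt.{u} (ModuleCat.{u} R)] (M : ModuleCat.{u} R)
    (h : ∀ I : Ideal R, Subsingleton (Ext (ModuleCat.of R (R ⧸ I)) M 1)) : Injective M := by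
  rw [← Module.injective_iff_injective_object, ← Module.Baer.iff_injective]
  intro I g
  have hS := exists_shortExact I.subtype (Submodule.mkQ I) I.injective_subtype
    (Submodule.mkQ_surjective I) (LinearMap.exact_subtype_mkQ I)
  have := h I
  obtain ⟨φ, hφ⟩ := Ext.contravariant_sequence_exact₁ hS M (Ext.mk₀ (ModuleCat.ofHom g))
    (zero_add 1) (Subsingleton.elim (α := Ext (ModuleCat.of R (R ⧸ I)) M 1) _ _)
  obtain ⟨φ, rfl⟩ := Ext.homEquiv₀.symm.surjective φ
  refine ⟨φ.hom, fun x hx => ?_⟩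
  have h2 : ModuleCat.ofHom I.subtype ≫ φ = ModuleCat.ofHom g :=
    Ext.homEquiv₀.symm.injective (by simpa using hφ)
  exact congrArg (fun f => f.hom ⟨x, hx⟩) h2

lemma hasInjectiveDimensionLE_of_ext [HasExt.{u} (ModuleCat.{u} R)] (n : ℕ) (M : ModuleCat.{u} R)
    (h : ∀ I : Ideal R, Subsingleton (Ext (ModuleCat.of R (R ⧸ I)) M (n + 1))) :
    HasInjectiveDimensionLE M n := by
  induction n generalizing M with
  | zero => exact injective_iff_hasInjectiveDimensionLT_one.1 (injective_of_ext_one M h)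
  | succ n ih =>
    obtain ⟨I, inj, f, monof⟩ := (inferInstance : EnoughInjectives (ModuleCat.{u} R)).1 M
    let S := ShortComplex.mk f (Limits.cokernel.π f) (Limits.cokernel.condition f)
    have hS : S.ShortExact := { exact := ShortComplex.exact_cokernel f }
    refine (hS.hasInjectiveDimensionLT_X₃_iff n inj).1 (ih S.X₃ fun J => ?_)
    refine subsingleton_of_forall_eq 0 fun x => ?_
    have := h J
    obtain ⟨y, rfl⟩ := Ext.covariant_sequence_exact₃ _ hS x rfl
      (Subsingleton.elim (α := Ext (ModuleCat.of R (R ⧸ J)) M (n + 1 + 1)) _ _)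
    have hy : y = 0 := Ext.eq_zero_of_injective (I := I) y
    rw [hy, Ext.zero_comp]

lemma smul_ext_eq_zero [HasExt.{u} (ModuleCat.{u} R)] {X M : ModuleCat.{u} R} {i : ℕ} (r : R)
    (hr : ∀ z : X, r • z = 0) (x : Ext X M i) : r • x = 0 := by
  have h : r • 𝟙 X = 0 := ModuleCat.hom_ext (LinearMap.ext fun z => hr z)
  rw [← smul_eq_mk₀_comp, h, Ext.mk₀_zero, Ext.zero_comp]

variable [IsNoetherianRing R] [IsLocalRing R] [HasExt.{u} (ModuleCat.{u} R)]

/-- Vanishing of `Ext^i(k,M)` for `i ≥ d` gives vanishing for prime quotients. -/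
lemma subsingleton_ext_prime (M : ModuleCat.{u} R) [Module.Finite R M] (d : ℕ)
    (h : ∀ i, d ≤ i →
      Subsingleton (Ext (ModuleCat.of R (R ⧸ IsLocalRing.maximalIdeal R)) M i))
    (p : Ideal R) : p.IsPrime → ∀ i, d ≤ i → Subsingleton (Ext (ModuleCat.of R (R ⧸ p)) M i) := by
  induction p using WellFoundedGT.induction with
  | ind p ih =>
  intro hp i hi
  by_cases hpm : p = IsLocalRing.maximalIdeal R
  · subst hpm; exact h i hi
  have hlt : p < IsLocalRing.maximalIdeal R :=
    lt_of_le_of_ne (IsLocalRing.le_maximalIdeal hp.ne_top) hpm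
  obtain ⟨x, hxm, hxp⟩ := SetLike.exists_of_lt hlt
  have reg : IsSMulRegular (ModuleCat.of R (R ⧸ p)) x := by
    have : IsDomain (R ⧸ p) := Ideal.Quotient.isDomain p
    intro a b hab
    have hx0 : (algebraMap R (R ⧸ p)) x ≠ 0 := by
      intro h0; exact hxp (Ideal.Quotient.eq_zero_iff_mem.1 h0)
    have hab' : x • (a : R ⧸ p) = x • (b : R ⧸ p) := hab
    rw [Algebra.smul_def, Algebra.smul_def] at hab'
    exact mul_left_cancel₀ hx0 hab'
  have hS := reg.smulShortComplex_shortExact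
  have h3 : ∀ i, d ≤ i → Subsingleton
      (Ext ((ModuleCat.of R (R ⧸ p)).smulShortComplex x).X₃ M i) := by
    intro i hi
    refine subsingleton_ext_of_primes M d (p ⊔ Ideal.span {x}) (fun q hq hle => ih q ?_ hq) _ ?_ i hi
    · refine lt_of_le_of_ne (le_sup_left.trans hle) ?_
      rintro rfl
      exact hxp (hle (Ideal.mem_sup_right (Ideal.mem_span_singleton_self x)))
    · suffices h : p ⊔ Ideal.span {x} ≤ Module.annihilator R
          (QuotSMulTop x (R ⧸ p)) by
        intro y hy z
        exact Module.mem_annihilator.1 (h hy) z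
      refine sup_le ?_ ?_
      · intro y hy
        rw [Module.mem_annihilator]
        intro z
        obtain ⟨z, rfl⟩ := Submodule.mkQ_surjective _ z
        obtain ⟨z, rfl⟩ := Ideal.Quotient.mk_surjective z
        rw [← map_smul]
        have : y • (Ideal.Quotient.mk p z) = 0 := by
          rw [Algebra.smul_def]
          change Ideal.Quotient.mk p y * _ = 0
          rw [Ideal.Quotient.eq_zero_iff_mem.2 hy, zero_mul]
        rw [this, map_zero]
      · rw [Ideal.span_le, Set.singleton_subset_iff]
        rw [SetLike.mem_coe, Module.mem_annihilator]
        intro z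
        obtain ⟨z, rfl⟩ := Submodule.mkQ_surjective _ z
        rw [← map_smul, Submodule.mkQ_apply, Submodule.Quotient.mk_eq_zero]
        exact Submodule.smul_mem_pointwise_smul _ _ _ trivial
  have hfin : Module.Finite R (Ext (ModuleCat.of R (R ⧸ p)) M i) := inferInstance
  have hsurj : ∀ e : Ext (ModuleCat.of R (R ⧸ p)) M i, ∃ e', x • e' = e := by
    intro e
    have := h3 (1 + i) (by omega)
    obtain ⟨e', he'⟩ := Ext.contravariant_sequence_exact₁ hS M e rfl (Subsingleton.elim _ _)
    exact ⟨e', (smul_eq_mk₀_comp (X := ModuleCat.of R (R ⧸ p)) x e').symm.trans he'⟩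
  have htop : (⊤ : Submodule R (Ext (ModuleCat.of R (R ⧸ p)) M i)) = ⊥ := by
    refine Submodule.eq_bot_of_le_smul_of_le_jacobson_bot (Ideal.span {x}) ⊤ hfin.fg_top ?_ ?_
    · intro e _
      obtain ⟨e', rfl⟩ := hsurj e
      exact Submodule.smul_mem_smul (Ideal.mem_span_singleton_self x) trivial
    · rw [IsLocalRing.jacobson_eq_maximalIdeal _ bot_ne_top, Ideal.span_le,
        Set.singleton_subset_iff]
      exact hxm
  exact (Submodule.subsingleton_iff R).1 (subsingleton_of_bot_eq_top htop.symm)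

lemma subsingleton_ext_finite (M : ModuleCat.{u} R) [Module.Finite R M] (d : ℕ)
    (h : ∀ i, d ≤ i →
      Subsingleton (Ext (ModuleCat.of R (R ⧸ IsLocalRing.maximalIdeal R)) M i))
    (N : Type u) [AddCommGroup N] [Module R N] [Module.Finite R N] (i : ℕ) (hi : d ≤ i) :
    Subsingleton (Ext (ModuleCat.of R N) M i) :=
  subsingleton_ext_of_primes M d ⊥ (fun q hq _ => subsingleton_ext_prime M d h q hq) N
    (by rintro x rfl y; exact zero_smul _ _) i hi

lemma subsingleton_ext_all (M : ModuleCat.{u} R) [Module.Finite R M] (d : ℕ)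
    (h : ∀ i, d < i →
      Subsingleton (Ext (ModuleCat.of R (R ⧸ IsLocalRing.maximalIdeal R)) M i))
    (N : ModuleCat.{u} R) (i : ℕ) (hi : d < i) : Subsingleton (Ext N M i) := by
  have : HasInjectiveDimensionLE M d := hasInjectiveDimensionLE_of_ext d M fun I =>
    subsingleton_ext_finite M (d + 1) (fun i hi => h i hi) (R ⧸ I) (d + 1) le_rfl
  exact HasInjectiveDimensionLT.subsingleton M (d + 1) i hi N

/-- Cutting down by a maximal regular sequence. -/
lemma exists_cut (B : ModuleCat.{u} R) (t : ℕ) : ∀ (j : ℕ) (M : ModuleCat.{u} R)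
    [Module.Finite R M],
    (∀ i, i < t → Subsingleton (Ext (ModuleCat.of R (R ⧸ IsLocalRing.maximalIdeal R)) M i)) →
    ¬ Subsingleton (Ext (ModuleCat.of R (R ⧸ IsLocalRing.maximalIdeal R)) M t) →
    (∀ i, j < i → Subsingleton (Ext M B i)) →
    (∃ g : Ext M B j, ∀ e, ∃ r : R, r • g = e) →
    ∃ C : ModuleCat.{u} R,
      ¬ Subsingleton (Ext (ModuleCat.of R (R ⧸ IsLocalRing.maximalIdeal R)) C 0) ∧
      (∀ i, j + t < i → Subsingleton (Ext C B i)) ∧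
      (∃ g : Ext C B (j + t), ∀ e, ∃ r : R, r • g = e) := by
  induction t with
  | zero => exact fun j M _ _ h1 h2 h3 => ⟨M, h1, h2, h3⟩
  | succ t ih =>
    intro j M _ h0 h1 h2 h3
    have hss : Subsingleton ((R ⧸ IsLocalRing.maximalIdeal R) →ₗ[R] M) := by
      have := h0 0 (by omega)
      exact (Ext.linearEquiv₀ (R := R) (X := ModuleCat.of R (R ⧸ IsLocalRing.maximalIdeal R))
        (Y := M).trans ModuleCat.homLinearEquiv).symm.toEquiv.subsingleton
    obtain ⟨x, hx, reg⟩ := IsSMulRegular.subsingleton_linearMap_iff.1 hss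
    have hS := reg.smulShortComplex_shortExact
    have : Module.Finite R (M.smulShortComplex x).X₃ :=
      inferInstanceAs (Module.Finite R (QuotSMulTop x M))
    have key := ih (j + 1) (M.smulShortComplex x).X₃ ?_ ?_ ?_ ?_
    · rwa [add_assoc, add_comm 1 t] at key
    · intro i hi
      refine subsingleton_of_forall_eq 0 fun y => ?_
      have := h0 (i + 1) (by omega)
      have := h0 i (by omega)
      obtain ⟨z, rfl⟩ := Ext.covariant_sequence_exact₃ _ hS y rfl
        (Subsingleton.elim (α := Ext (ModuleCat.of R (R ⧸ IsLocalRing.maximalIdeal R)) M (i + 1)) _ _)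
      have hz : z = 0 :=
        Subsingleton.elim (α := Ext (ModuleCat.of R (R ⧸ IsLocalRing.maximalIdeal R)) M i) z 0
      rw [hz, Ext.zero_comp]
    · intro hs
      refine h1 (subsingleton_of_forall_eq 0 fun y => ?_)
      have h0' : y.comp (Ext.mk₀ (M.smulShortComplex x).f) (add_zero _) = 0 := by
        change y.comp (Ext.mk₀ (x • 𝟙 M)) (add_zero _) = 0
        rw [← Ext.smul_eq_comp_mk₀]
        exact smul_ext_eq_zero x (fun z => Module.mem_annihilator.1 hx z) y
      obtain ⟨z, rfl⟩ := Ext.covariant_sequence_exact₁ _ hS y h0' rfl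
      have hz : z = 0 := Subsingleton.elim _ _
      rw [hz, Ext.zero_comp]
      rfl
    · intro i hi
      obtain ⟨i, rfl⟩ : ∃ i', i = 1 + i' := ⟨i - 1, by omega⟩
      refine subsingleton_of_forall_eq 0 fun y => ?_
      have := h2 (1 + i) (by omega)
      have := h2 i (by omega)
      obtain ⟨z, rfl⟩ := Ext.contravariant_sequence_exact₃ hS B y
        (Subsingleton.elim (α := Ext M B (1 + i)) _ _) rfl
      have hz : z = 0 := Subsingleton.elim (α := Ext M B i) z 0
      rw [hz, Ext.comp_zero]
    · obtain ⟨g, hg⟩ := h3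
      refine ⟨hS.extClass.comp g (add_comm 1 j), fun e => ?_⟩
      have := h2 (j + 1) (by omega)
      obtain ⟨z, rfl⟩ := Ext.contravariant_sequence_exact₃ hS B e
        (Subsingleton.elim (α := Ext M B (j + 1)) _ _) (add_comm 1 j)
      obtain ⟨r, rfl⟩ := hg z
      exact ⟨r, (Ext.comp_smul _ _ _ _).symm⟩

lemma exists_ext_ne :
    ∃ i, ¬ Subsingleton (Ext (ModuleCat.of R (R ⧸ IsLocalRing.maximalIdeal R))
      (ModuleCat.of R R) i) := by
  by_contra! hcon
  have := subsingleton_ext_finite (ModuleCat.of R R) 0 (fun i _ => hcon i) R 0 le_rfl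
  have h2 : Subsingleton (R →ₗ[R] R) :=
    (Ext.linearEquiv₀ (R := R) (X := ModuleCat.of R R) (Y := ModuleCat.of R R).trans
      ModuleCat.homLinearEquiv).symm.toEquiv.subsingleton
  have h3 : (LinearMap.id : R →ₗ[R] R) = 0 := Subsingleton.elim _ _
  exact one_ne_zero (LinearMap.congr_fun h3 (1 : R))

theorem backward (n : ℕ) (hn : ∀ (M : ModuleCat.{u} R) (i : ℕ), n < i →
        Subsingleton (Ext M (ModuleCat.of R R) i)) :
    ∃ d : ℕ,
        Nonempty (Ext (ModuleCat.of R (R ⧸ IsLocalRing.maximalIdeal R))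
            (ModuleCat.of R R) d ≃+ (R ⧸ IsLocalRing.maximalIdeal R)) ∧
        ∀ i : ℕ, i ≠ d →
          Subsingleton (Ext (ModuleCat.of R (R ⧸ IsLocalRing.maximalIdeal R))
            (ModuleCat.of R R) i) := by
  classical
  set K := ModuleCat.of R (R ⧸ IsLocalRing.maximalIdeal R) with hK
  have hex := exists_ext_ne (R := R)
  obtain ⟨t, ht, htmin⟩ : ∃ t, ¬ Subsingleton (Ext K (ModuleCat.of R R) t) ∧
      ∀ i < t, Subsingleton (Ext K (ModuleCat.of R R) i) :=
    ⟨Nat.find hex, Nat.find_spec hex, fun i hi => not_not.1 (Nat.find_min hex hi)⟩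
  obtain ⟨C, hC0, hC1, hC2⟩ := exists_cut (ModuleCat.of R R) t 0 (ModuleCat.of R R)
    htmin ht (fun i hi => by
      have : Projective (ModuleCat.of R R) := ModuleCat.projective_of_free (Module.Basis.singleton Unit R)
      obtain ⟨i, rfl⟩ : ∃ i', i = i' + 1 := ⟨i - 1, by omega⟩
      exact subsingleton_of_forall_eq 0 fun y => Ext.eq_zero_of_projective y) (by
      refine ⟨Ext.mk₀ (𝟙 _), fun e => ?_⟩
      obtain ⟨f, rfl⟩ := Ext.homEquiv₀.symm.surjective e
      refine ⟨f.hom (1 : R), ?_⟩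
      rw [Ext.homEquiv₀_symm_apply, ← Ext.mk₀_smul]
      congr 1
      ext
      simp)
  simp only [zero_add] at hC1
  -- the embedding of the residue field
  obtain ⟨f, hf⟩ : ∃ f : K ⟶ C, f ≠ 0 := by
    by_contra! hcon
    refine hC0 (subsingleton_of_forall_eq 0 fun y => ?_)
    obtain ⟨y, rfl⟩ := Ext.homEquiv₀.symm.surjective y
    rw [hcon y]; simp
  have hsimple : IsSimpleModule R K := by
    have : IsSimpleModule R (R ⧸ IsLocalRing.maximalIdeal R) :=
      isSimpleModule_iff_isCoatom.2 (IsLocalRing.maximalIdeal.isMaximal R).out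
    exact this
  have hinj : Function.Injective f.hom :=
    (LinearMap.injective_or_eq_zero f.hom).resolve_right fun h => hf (ModuleCat.hom_ext h)
  have hmono : Mono f := (ModuleCat.mono_iff_injective f).2 hinj
  let S := ShortComplex.mk f (Limits.cokernel.π f) (Limits.cokernel.condition f)
  have hS : S.ShortExact := { exact := ShortComplex.exact_cokernel f }
  have hvan : ∀ i, t < i → Subsingleton (Ext K (ModuleCat.of R R) i) := by
    have hdown : ∀ r, (∀ i, t + r < i → Subsingleton (Ext K (ModuleCat.of R R) i)) →
        ∀ i, t < i → Subsingleton (Ext K (ModuleCat.of R R) i) := by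
      intro r
      induction r with
      | zero => exact fun h => h
      | succ r ih =>
        intro h
        refine ih fun i hi => ?_
        by_cases hi' : t + (r + 1) < i
        · exact h i hi'
        obtain rfl : i = t + (r + 1) := by omega
        refine subsingleton_of_forall_eq 0 fun y => ?_
        have h3 := subsingleton_ext_all (ModuleCat.of R R) (t + (r + 1)) h S.X₃
          (1 + (t + (r + 1))) (by omega)
        obtain ⟨z, rfl⟩ := Ext.contravariant_sequence_exact₁ hS (ModuleCat.of R R) y rfl
          (Subsingleton.elim _ _)
        have hc := hC1 (t + (r + 1)) (by omega)
        have hz : z = 0 := hc.elim _ _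
        rw [hz, Ext.comp_zero]
    exact hdown n fun i hi => hn K i (by omega)
  have hg' : ∃ g : Ext K (ModuleCat.of R R) t, ∀ e, ∃ r : R, r • g = e := by
    obtain ⟨g, hg⟩ : ∃ g : Ext C (ModuleCat.of R R) t, ∀ e, ∃ r : R, r • g = e := by
      have := hC2
      rwa [zero_add] at this
    refine ⟨(Ext.mk₀ f).comp g (zero_add t), fun e => ?_⟩
    have h3 := subsingleton_ext_all (ModuleCat.of R R) t hvan S.X₃ (1 + t) (by omega)
    obtain ⟨z, hz⟩ := Ext.contravariant_sequence_exact₁ hS (ModuleCat.of R R) e rfl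
      (Subsingleton.elim _ _)
    obtain ⟨r, rfl⟩ := hg z
    exact ⟨r, by rw [← hz, ← Ext.comp_smul]⟩
  obtain ⟨g', hg'⟩ := hg'
  refine ⟨t, ?_, fun i hi => ?_⟩
  · let φ := LinearMap.toSpanSingleton R (Ext K (ModuleCat.of R R) t) g'
    have hsurj : Function.Surjective φ := fun e => hg' e
    have hker : LinearMap.ker φ = IsLocalRing.maximalIdeal R := by
      have hne : LinearMap.ker φ ≠ ⊤ := by
        intro htop
        rw [LinearMap.ker_eq_top] at htop
        refine ht (subsingleton_of_forall_eq 0 fun y => ?_)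
        obtain ⟨r, rfl⟩ := hsurj y
        rw [htop]; rfl
      refine le_antisymm (IsLocalRing.le_maximalIdeal hne) fun x hx => ?_
      rw [LinearMap.mem_ker]
      change x • g' = 0
      refine smul_ext_eq_zero x (fun z => ?_) g'
      obtain ⟨z, rfl⟩ := Submodule.mkQ_surjective (IsLocalRing.maximalIdeal R) z
      change Submodule.mkQ (IsLocalRing.maximalIdeal R) (x • z) = 0
      rw [Submodule.mkQ_apply, Submodule.Quotient.mk_eq_zero]
      exact Ideal.mul_mem_right z _ hx
    exact ⟨((Submodule.quotEquivOfEq _ _ hker).symm.trans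
      (φ.quotKerEquivOfSurjective hsurj)).symm.toAddEquiv⟩
  · rcases lt_or_gt_of_ne hi with h | h
    · exact htmin i h
    · exact hvan i h

end GorAux


/-- A commutative Noetherian local ring `R` with residue field `k` is
Gorenstein — in the sense that `Ext^*_R(k,R)` is concentrated in one degree where it
equals `k` — if and only if `R` has finite injective dimension as a module over itself
(expressed by the standard characterization: there is `n` such that `Ext^i_R(M,R) = 0`
for all modules `M` and all `i > n`). -/
theorem gorenstein_iff_finite_injective_dimension
    (R : Type u) [CommRing R] [IsNoetherianRing R] [IsLocalRing R]
    [HasExt.{u} (ModuleCat.{u} R)] :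
    ((∃ d : ℕ,
        Nonempty (Abelian.Ext (ModuleCat.of R (R ⧸ IsLocalRing.maximalIdeal R))
            (ModuleCat.of R R) d ≃+ (R ⧸ IsLocalRing.maximalIdeal R)) ∧
        ∀ i : ℕ, i ≠ d →
          Subsingleton (Abelian.Ext (ModuleCat.of R (R ⧸ IsLocalRing.maximalIdeal R))
            (ModuleCat.of R R) i)) ↔
      (∃ n : ℕ, ∀ (M : ModuleCat.{u} R) (i : ℕ), n < i →
        Subsingleton (Abelian.Ext M (ModuleCat.of R R) i))) := by
  constructor
  · rintro ⟨d, -, h⟩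
    exact ⟨d, GorAux.subsingleton_ext_all (ModuleCat.of R R) d fun i hi => h i (by omega)⟩
  · rintro ⟨n, hn⟩
    exact GorAux.backward n hn
end

section
/- Let R be a commutative Noetherian local ring with residue field k. Then R is regular if and only if k has finite projective dimension as an R-module (Serre's theorem); in particular, if R is regular then k is a perfect complex over R. -/
open CategoryTheory Pretriangulated Limits

universe v u

variable {C : Type u} [Category.{v} C] [HasZeroObject C] [Preadditive C]
  [HasShift C ℤ] [∀ n : ℤ, (shiftFunctor C n).Additive] [Pretriangulated C]

/-- `IsThickBuilt S X` : `X` belongs to the thick subcategory generated by `S`. -/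
inductive IsThickBuilt (S : C) : C → Prop
  | base : IsThickBuilt S S
  | of_iso {X Y : C} (_ : X ≅ Y) : IsThickBuilt S X → IsThickBuilt S Y
  | shift (X : C) (n : ℤ) : IsThickBuilt S X → IsThickBuilt S (X⟦n⟧)
  | ext₂ {T : Triangle C} (_ : T ∈ distTriang C) :
      IsThickBuilt S T.obj₁ → IsThickBuilt S T.obj₃ → IsThickBuilt S T.obj₂
  | retract {X Y : C} (i : Y ⟶ X) (p : X ⟶ Y) (_ : i ≫ p = 𝟙 Y) :
      IsThickBuilt S X → IsThickBuilt S Y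


open IsLocalRing RingTheory.Sequence

section Helpers

lemma ofList_eq_span {R : Type u} [CommRing R] (rs : List R) :
    Ideal.ofList rs = Ideal.span {x : R | x ∈ rs} := rfl

lemma thick_quot {R : Type u} [CommRing R] [HasDerivedCategory.{u} (ModuleCat.{u} R)]
    (S : DerivedCategory (ModuleCat.{u} R)) (rs : List R) : ∀ (M : ModuleCat.{u} R)
    (_ : IsWeaklyRegular M rs)
    (_ : IsThickBuilt S ((DerivedCategory.singleFunctor (ModuleCat.{u} R) 0).obj M)),
    IsThickBuilt S ((DerivedCategory.singleFunctor (ModuleCat.{u} R) 0).obj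
      (ModuleCat.of R (M ⧸ Ideal.ofList rs • (⊤ : Submodule R M)))) := by
  induction rs with
  | nil =>
    intro M _ h
    refine IsThickBuilt.of_iso ?_ h
    refine (DerivedCategory.singleFunctor (ModuleCat.{u} R) 0).mapIso ?_
    exact (Submodule.quotEquivOfEqBot (Ideal.ofList [] • (⊤ : Submodule R M))
      (by rw [Ideal.ofList_nil, Submodule.bot_smul])).symm.toModuleIso
  | cons x rs ih =>
    intro M reg h
    rw [isWeaklyRegular_cons_iff] at reg
    have h1 : IsThickBuilt S ((DerivedCategory.singleFunctor (ModuleCat.{u} R) 0).obj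
        (ModuleCat.of R (QuotSMulTop x M))) := by
      have hS := reg.1.smulShortComplex_shortExact
      have hT := rot_of_distTriang _ hS.singleTriangle_distinguished
      exact IsThickBuilt.ext₂ hT h (IsThickBuilt.shift _ 1 h)
    refine IsThickBuilt.of_iso ?_ (ih (ModuleCat.of R (QuotSMulTop x M)) reg.2 h1)
    refine (DerivedCategory.singleFunctor (ModuleCat.{u} R) 0).mapIso ?_
    exact (Submodule.quotOfListConsSMulTopEquivQuotSMulTopInner M x rs).symm.toModuleIso

lemma quot_equiv {R : Type u} [CommRing R] (rs : List R) (I : Ideal R)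
    (h : Ideal.span {x : R | x ∈ rs} = I) :
    Nonempty (ModuleCat.of R (R ⧸ Ideal.ofList rs • (⊤ : Submodule R R)) ≅
      ModuleCat.of R (R ⧸ I)) :=
  ⟨(Submodule.quotEquivOfEq _ _ (by rw [← h, ofList_eq_span]; simp)).toModuleIso⟩

lemma fwd {R : Type u} [CommRing R] [IsNoetherianRing R] [IsLocalRing R] (rs : List R)
    (reg : IsRegular R rs) (h : Ideal.span {x : R | x ∈ rs} = maximalIdeal R) :
    HasProjectiveDimensionLE (ModuleCat.of R (R ⧸ maximalIdeal R)) rs.length := by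
  have mem : ∀ r ∈ rs, r ∈ maximalIdeal R := fun r hr => h ▸ Ideal.subset_span hr
  have := ModuleCat.projectiveDimension_quotient_eq_add_length_of_isWeaklyRegular
    (ModuleCat.of R R) rs reg.1 mem
  rw [ModuleCat.projectiveDimension_eq_zero_of_projective (ModuleCat.of R R), zero_add] at this
  obtain ⟨e⟩ := quot_equiv rs _ h
  have h2 := (projectiveDimension_le_iff _ _).mp this.le
  exact hasProjectiveDimensionLT_of_iso e _

/-- If the socle is nonzero, finite modules of finite projective dimension are projective. -/
lemma proj_of_socle {R : Type u} [CommRing R] [IsNoetherianRing R] [IsLocalRing R] (a : R)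
    (ha : Ideal.span {a} ≠ ⊥) (ham : ∀ r ∈ maximalIdeal R, r * a = 0) (n : ℕ) :
    ∀ (M : ModuleCat.{u} R) [Module.Finite R M] [HasProjectiveDimensionLE M n],
      Module.Projective R M := by
  have ha0 : a ≠ 0 := by rintro rfl; simp at ha
  let j : ResidueField R →ₗ[R] R := Submodule.liftQ (maximalIdeal R)
    (LinearMap.toSpanSingleton R R a) (fun r hr => by simpa using ham r hr)
  have hj : Function.Injective j := by
    rw [← LinearMap.ker_eq_bot]
    refine Submodule.ker_liftQ_eq_bot' _ _ ?_
    refine le_antisymm (fun r hr => by simpa using ham r hr) fun r hr => ?_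
    by_contra hu
    have hu : IsUnit r := by simpa using hu
    simp only [LinearMap.mem_ker, LinearMap.toSpanSingleton_apply, smul_eq_mul] at hr
    exact ha0 (hu.mul_right_eq_zero.mp hr)
  induction n with
  | zero =>
    intro M _ h
    rw [IsProjective.iff_projective]
    exact (projective_iff_hasProjectiveDimensionLE_zero _).mpr h
  | succ n ih =>
    intro M _ h
    rcases Module.exists_finite_presentation R M with ⟨F, _, _, _, _, f, surjf⟩
    let S : ShortComplex (ModuleCat.{u} R) := f.shortComplexKer
    have hS : S.ShortExact := LinearMap.shortExact_shortComplexKer surjf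
    have hK : HasProjectiveDimensionLE S.X₁ n :=
      (hS.hasProjectiveDimensionLT_X₃_iff n inferInstance).mp h
    have : Module.Projective R S.X₁ := ih S.X₁
    have : Module.Projective R (LinearMap.ker f) := this
    have hinj : Function.Injective ((LinearMap.ker f).subtype.lTensor (ResidueField R)) := by
      have h1 : Function.Injective (j.rTensor (LinearMap.ker f)) :=
        Module.Flat.rTensor_preserves_injective_linearMap _ hj
      have h2 : Function.Injective ((LinearMap.ker f).subtype.lTensor R) :=
        Module.Flat.lTensor_preserves_injective_linearMap _ (Submodule.injective_subtype _)
      have h3 := h2.comp h1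
      rw [← LinearMap.coe_comp, LinearMap.lTensor_comp_rTensor,
        ← LinearMap.rTensor_comp_lTensor, LinearMap.coe_comp] at h3
      exact h3.of_comp
    obtain ⟨l, hl⟩ :=
      (IsLocalRing.split_injective_iff_lTensor_residueField_injective _).mpr hinj
    have hex : Function.Exact (LinearMap.ker f).subtype f := LinearMap.exact_subtype_ker_map f
    have key : (Function.Injective (LinearMap.ker f).subtype ∧ ∃ s, f ∘ₗ s = LinearMap.id) ↔
        (Function.Surjective f ∧ ∃ l, l ∘ₗ (LinearMap.ker f).subtype = LinearMap.id) :=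
      hex.split_tfae'.out 0 1
    obtain ⟨s, hs⟩ := (key.mpr ⟨surjf, l, hl⟩).2
    exact Module.Projective.of_split s f hs

end Helpers

section Helpers2

lemma pd_quot_step {R : Type u} [CommRing R] (x : R) (n : ℕ) {K F M : Type u}
    [AddCommGroup K] [AddCommGroup F] [AddCommGroup M] [Module R K] [Module R F] [Module R M]
    [Module.Projective R F] (i : K →ₗ[R] F) (f : F →ₗ[R] M) (hi : Function.Injective i)
    (hex : Function.Exact i f) (surjf : Function.Surjective f) (hM : IsSMulRegular M x)
    (hK : HasProjectiveDimensionLE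
      (ModuleCat.of (R ⧸ Ideal.span {x}) (QuotSMulTop x K)) n) :
    HasProjectiveDimensionLE
      (ModuleCat.of (R ⧸ Ideal.span {x}) (QuotSMulTop x M)) (n + 1) := by
  have hsurj : Function.Surjective (algebraMap R (R ⧸ Ideal.span {x})) :=
    Ideal.Quotient.mk_surjective
  have e1 := QuotSMulTop.map_exact x hex surjf
  have e2 : Function.Injective (QuotSMulTop.map x i) := by
    have h0 : Function.Exact (0 : PUnit.{u+1} →ₗ[R] K) i := by
      rw [LinearMap.exact_iff, LinearMap.ker_eq_bot.mpr hi, LinearMap.range_zero]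
    have := QuotSMulTop.map_first_exact_on_four_term_exact_of_isSMulRegular_last h0 hex hM
    rw [LinearMap.exact_iff] at this
    rw [← LinearMap.ker_eq_bot, this]
    simp
  have e3 := QuotSMulTop.map_surjective x surjf
  let S : ShortComplex (ModuleCat.{u} (R ⧸ Ideal.span {x})) :=
    ModuleCat.shortComplexOfCompEqZero
      ((QuotSMulTop.map x i).extendScalarsOfSurjective hsurj)
      ((QuotSMulTop.map x f).extendScalarsOfSurjective hsurj)
      (LinearMap.ext fun y => e1.apply_apply_eq_zero y)
  have hS' : S.ShortExact :=
    { exact := ModuleCat.shortComplex_exact _ e1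
      mono_f := (ModuleCat.mono_iff_injective _).mpr e2
      epi_g := (ModuleCat.epi_iff_surjective _).mpr e3 }
  have hP : Projective S.X₂ := by
    refine (IsProjective.iff_projective _).mp ?_
    exact Module.Projective.of_equiv ((QuotSMulTop.equivQuotTensor x F).extendScalarsOfSurjective
      hsurj).symm
  exact (hS'.hasProjectiveDimensionLT_X₃_iff n hP).mpr hK

lemma pd_quot {R : Type u} [CommRing R] (x : R) (hx : IsSMulRegular R x) (n : ℕ) :
    ∀ (M : ModuleCat.{u} R) (_ : IsSMulRegular M x) (_ : HasProjectiveDimensionLE M n),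
      HasProjectiveDimensionLE
        (ModuleCat.of (R ⧸ Ideal.span {x}) (QuotSMulTop x M)) n := by
  have hsurj : Function.Surjective (algebraMap R (R ⧸ Ideal.span {x})) :=
    Ideal.Quotient.mk_surjective
  induction n with
  | zero =>
    intro M _ h
    refine (projective_iff_hasProjectiveDimensionLE_zero _).mp ?_
    rw [← IsProjective.iff_projective]
    have : Module.Projective R M :=
      (IsProjective.iff_projective _).mpr ((projective_iff_hasProjectiveDimensionLE_zero _).mpr h)
    exact Module.Projective.of_equiv ((QuotSMulTop.equivQuotTensor x M).extendScalarsOfSurjective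
      hsurj).symm
  | succ n ih =>
    intro M hM h
    let f : (M →₀ R) →ₗ[R] M := Finsupp.linearCombination R id
    have surjf : Function.Surjective f := fun m => ⟨Finsupp.single m 1, by simp [f]⟩
    have hS := LinearMap.shortExact_shortComplexKer surjf
    have hK : HasProjectiveDimensionLE f.shortComplexKer.X₁ n :=
      (hS.hasProjectiveDimensionLT_X₃_iff n (inferInstanceAs (Projective (ModuleCat.of R _)))).mp h
    have hF : IsSMulRegular (M →₀ R) x := fun a b hab => by
      ext i
      exact hx (DFunLike.congr_fun hab i)
    have hKreg : IsSMulRegular (LinearMap.ker f) x :=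
      hF.of_injective (LinearMap.ker f).subtype (Submodule.injective_subtype _)
    have hK' := ih (ModuleCat.of R (LinearMap.ker f)) hKreg hK
    have hex : Function.Exact (LinearMap.ker f).subtype f := LinearMap.exact_subtype_ker_map f
    exact pd_quot_step x n (LinearMap.ker f).subtype f (Submodule.injective_subtype _) hex surjf hM hK'

lemma exists_reg {R : Type u} [CommRing R] [IsNoetherianRing R] [IsLocalRing R] (n : ℕ)
    (hm : maximalIdeal R ≠ ⊥)
    (h : HasProjectiveDimensionLE (ModuleCat.of R (R ⧸ maximalIdeal R)) n) :
    ∃ x ∈ maximalIdeal R, x ∉ maximalIdeal R ^ 2 ∧ IsSMulRegular R x := by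
  by_contra! hcon
  have hsub : (maximalIdeal R : Set R) ⊆
      ⋃ p ∈ insert (maximalIdeal R ^ 2) (associatedPrimes R R), (id p : Ideal R) := by
    intro x hx
    rw [Set.biUnion_insert]
    by_cases hx2 : x ∈ maximalIdeal R ^ 2
    · exact Or.inl hx2
    · right
      have := hcon x hx hx2
      simp only [id]
      rw [biUnion_associatedPrimes_eq_zero_divisors R R]
      rw [isSMulRegular_iff_right_eq_zero_of_smul] at this
      push Not at this
      obtain ⟨a, h1, h2⟩ := this
      exact ⟨a, h2, h1⟩
  obtain ⟨p, hp, hle⟩ := (Ideal.subset_union_prime_finite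
    ((associatedPrimes.finite R R).insert _) (maximalIdeal R ^ 2) (maximalIdeal R ^ 2)
    (fun i hi h1 _ => (Set.mem_insert_iff.mp hi |>.resolve_left h1).1)).mp hsub
  rcases Set.mem_insert_iff.mp hp with rfl | hp
  · apply hm
    refine Submodule.eq_bot_of_le_smul_of_le_jacobson_bot (maximalIdeal R) _
      (IsNoetherian.noetherian _) ?_ (IsLocalRing.maximalIdeal_le_jacobson _)
    simpa [pow_two] using hle
  · obtain ⟨hpp, a, ha⟩ := isAssociatedPrime_iff.mp hp
    have hpm : maximalIdeal R = p := le_antisymm hle (le_maximalIdeal hpp.ne_top)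
    have ham : ∀ r ∈ maximalIdeal R, r * a = 0 := by
      intro r hr
      rw [hpm, ha] at hr
      simpa [Submodule.mem_colon_singleton] using hr
    have ha0 : a ≠ 0 := by
      rintro rfl
      apply hpp.ne_top
      rw [ha]
      simp
    have hproj : Module.Projective R (R ⧸ maximalIdeal R) :=
      proj_of_socle a (by simpa using ha0) ham n (ModuleCat.of R (R ⧸ maximalIdeal R))
    have : Module.Free R (R ⧸ maximalIdeal R) := Module.free_of_flat_of_isLocalRing
    have hann := Module.annihilator_eq_bot (R := R) (M := R ⧸ maximalIdeal R).mpr inferInstance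
    rw [Ideal.annihilator_quotient] at hann
    exact hm hann

end Helpers2

section Helpers3

lemma exists_split {R : Type u} [CommRing R] [IsLocalRing R]
    (x : R) (hx : x ∈ maximalIdeal R) (hx2 : x ∉ maximalIdeal R ^ 2)
    [IsLocalRing (R ⧸ Ideal.span {x})] :
    ∃ (s : maximalIdeal (R ⧸ Ideal.span {x}) →ₗ[R ⧸ Ideal.span {x}]
        QuotSMulTop x (maximalIdeal R))
      (p : QuotSMulTop x (maximalIdeal R) →ₗ[R ⧸ Ideal.span {x}]
        maximalIdeal (R ⧸ Ideal.span {x})), p ∘ₗ s = LinearMap.id := by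
  have hsurj : Function.Surjective (algebraMap R (R ⧸ Ideal.span {x})) :=
    Ideal.Quotient.mk_surjective
  have hloc : IsLocalHom (algebraMap R (R ⧸ Ideal.span {x})) :=
    IsLocalHom.of_surjective _ hsurj
  -- the projection of maximal ideals
  let q : maximalIdeal R →ₗ[R] maximalIdeal (R ⧸ Ideal.span {x}) :=
    { toFun := fun y => ⟨algebraMap R _ y.1, by
        have := y.2
        rw [mem_maximalIdeal, mem_nonunits_iff] at this ⊢
        rwa [isUnit_map_iff]⟩
      map_add' := fun a b => by ext; simp
      map_smul' := fun r a => by ext; simp [Algebra.smul_def] }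
  have hq : ∀ y, (q y : R ⧸ Ideal.span {x}) = Ideal.Quotient.mk _ y.1 := fun y => rfl
  have hqs : Function.Surjective q := by
    rintro ⟨y, hy⟩
    obtain ⟨r, rfl⟩ := hsurj y
    refine ⟨⟨r, ?_⟩, rfl⟩
    rw [mem_maximalIdeal, mem_nonunits_iff] at hy ⊢
    rwa [isUnit_map_iff] at hy
  let x' : maximalIdeal R := ⟨x, hx⟩
  have hqx : q x' = 0 := by
    ext
    rw [hq]
    exact Ideal.Quotient.eq_zero_iff_mem.mpr (Ideal.mem_span_singleton_self x)
  have hqk : ∀ y, q y = 0 → ∃ r : R, y = r • x' := by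
    intro y hy
    have : (y : R) ∈ Ideal.span {x} := by
      rw [← Ideal.Quotient.eq_zero_iff_mem, ← hq, hy]; rfl
    obtain ⟨r, hr⟩ := Ideal.mem_span_singleton'.mp this
    exact ⟨r, by ext; simp [x', hr]⟩
  -- the functional
  have hne : (maximalIdeal R).toCotangent x' ≠ 0 := by
    rw [Ne, Ideal.toCotangent_eq_zero]; exact hx2
  obtain ⟨φ, hφ⟩ := Module.Projective.exists_dual_eq_one (ResidueField R)
    (V := CotangentSpace R) hne
  let ψ : ResidueField R →ₗ[R] QuotSMulTop x (maximalIdeal R) :=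
    Submodule.liftQ (maximalIdeal R)
      (LinearMap.toSpanSingleton R _ (Submodule.Quotient.mk x')) (by
        intro r hr
        rw [LinearMap.mem_ker, LinearMap.toSpanSingleton_apply, ← Submodule.Quotient.mk_smul,
          Submodule.Quotient.mk_eq_zero]
        rw [Submodule.mem_smul_pointwise_iff_exists]
        exact ⟨⟨r, hr⟩, trivial, by ext; simp [x', mul_comm]⟩)
  have hψ : ∀ r : R, ψ (residue R r) = r • Submodule.Quotient.mk x' := fun r => rfl
  have hψ1 : ψ 1 = Submodule.Quotient.mk x' := by
    have := hψ 1
    rwa [map_one, one_smul] at this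
  let g : maximalIdeal R →ₗ[R] QuotSMulTop x (maximalIdeal R) :=
    Submodule.mkQ _ - ψ ∘ₗ (φ.restrictScalars R) ∘ₗ (maximalIdeal R).toCotangent
  have hgx : g x' = 0 := by
    simp only [g, LinearMap.sub_apply, LinearMap.comp_apply, LinearMap.restrictScalars_apply]
    rw [show φ ((maximalIdeal R).toCotangent x') = 1 from hφ, hψ1]
    simp
  let p : QuotSMulTop x (maximalIdeal R) →ₗ[R] maximalIdeal (R ⧸ Ideal.span {x}) :=
    Submodule.liftQ _ q (by
      intro y hy
      rw [Submodule.mem_smul_pointwise_iff_exists] at hy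
      obtain ⟨z, -, rfl⟩ := hy
      have : x • z = z.1 • x' := by ext; simp [x', mul_comm]
      rw [LinearMap.mem_ker, this, map_smul, hqx, smul_zero])
  have hp : ∀ y, p (Submodule.Quotient.mk y) = q y := fun y => rfl
  have hpψ : ∀ t, p (ψ t) = 0 := by
    intro t
    obtain ⟨r, rfl⟩ := residue_surjective t
    rw [hψ, map_smul, hp, hqx, smul_zero]
  have hpg : ∀ y, p (g y) = q y := by
    intro y
    simp only [g, LinearMap.sub_apply, LinearMap.comp_apply, map_sub, hpψ, sub_zero]
    rfl
  have hker : LinearMap.ker q ≤ LinearMap.ker g := by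
    intro y hy
    obtain ⟨r, rfl⟩ := hqk y hy
    rw [LinearMap.mem_ker, map_smul, hgx, smul_zero]
  let s : maximalIdeal (R ⧸ Ideal.span {x}) →ₗ[R] QuotSMulTop x (maximalIdeal R) :=
    (Submodule.liftQ _ g hker) ∘ₗ (q.quotKerEquivOfSurjective hqs).symm.toLinearMap
  have hs : ∀ y, s (q y) = g y := by
    intro y
    have : (q.quotKerEquivOfSurjective hqs).symm (q y) = Submodule.Quotient.mk y := by
      rw [LinearEquiv.symm_apply_eq]; rfl
    simp only [s, LinearMap.comp_apply, LinearEquiv.coe_coe, this]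
    rfl
  refine ⟨s.extendScalarsOfSurjective hsurj, p.extendScalarsOfSurjective hsurj, ?_⟩
  refine LinearMap.ext fun y => ?_
  obtain ⟨y, rfl⟩ := hqs y
  change p (s (q y)) = q y
  rw [hs, hpg]

lemma bwd (d : ℕ) : ∀ (R : Type u) [CommRing R] [IsNoetherianRing R] [IsLocalRing R] (n : ℕ)
    (_ : ringKrullDim R < d)
    (_ : HasProjectiveDimensionLE (ModuleCat.of R (R ⧸ maximalIdeal R)) n),
    ∃ rs : List R, IsRegular R rs ∧ Ideal.span {x : R | x ∈ rs} = maximalIdeal R := by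
  induction d with
  | zero =>
    intro R _ _ _ n hd
    exact absurd hd (not_lt.mpr (by simpa using ringKrullDim_nonneg_of_nontrivial))
  | succ d ih =>
    intro R _ _ _ n hd h
    by_cases hm : maximalIdeal R = ⊥
    · exact ⟨[], IsRegular.nil R R, by simp [hm]⟩
    obtain ⟨x, hx, hx2, hreg⟩ := exists_reg n hm h
    have hxtop : Ideal.span {x} ≠ ⊤ := fun h => by
      have : Ideal.span {x} ≤ maximalIdeal R := by simpa [Ideal.span_le] using hx
      exact (maximalIdeal.isMaximal R).ne_top (top_le_iff.mp (h ▸ this))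
    have : Nontrivial (R ⧸ Ideal.span {x}) := Ideal.Quotient.nontrivial_iff.mpr hxtop
    have hsurj : Function.Surjective (algebraMap R (R ⧸ Ideal.span {x})) :=
      Ideal.Quotient.mk_surjective
    have : IsLocalRing (R ⧸ Ideal.span {x}) := IsLocalRing.of_surjective' _ hsurj
    have hdim : ringKrullDim (R ⧸ Ideal.span {x}) < d := by
      have := ringKrullDim_quotient_span_singleton_succ_eq_ringKrullDim hreg hx
      rw [← this] at hd
      push_cast at hd
      exact lt_of_add_lt_add_right hd
    -- projective dimension of the maximal ideal
    have hmn : HasProjectiveDimensionLE (ModuleCat.of R (maximalIdeal R)) n := by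
      have h' : HasProjectiveDimensionLE (ModuleCat.of R (R ⧸ maximalIdeal R)) (n + 1) :=
        hasProjectiveDimensionLT_of_ge _ (n + 1) _ (by omega)
      let S : ShortComplex (ModuleCat.{u} R) := ModuleCat.shortComplexOfCompEqZero
        (maximalIdeal R).subtype (maximalIdeal R).mkQ (LinearMap.exact_subtype_mkQ _).linearMap_comp_eq_zero
      have hS : S.ShortExact :=
        { exact := ModuleCat.shortComplex_exact _ (LinearMap.exact_subtype_mkQ _)
          mono_f := (ModuleCat.mono_iff_injective _).mpr (Submodule.injective_subtype _)
          epi_g := (ModuleCat.epi_iff_surjective _).mpr (Submodule.mkQ_surjective _) }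
      exact (hS.hasProjectiveDimensionLT_X₃_iff n
        (inferInstanceAs (Projective (ModuleCat.of R R)))).mp h'
    have hmreg : IsSMulRegular (maximalIdeal R) x :=
      hreg.of_injective (maximalIdeal R).subtype (Submodule.injective_subtype _)
    have hq := pd_quot x hreg n _ hmreg hmn
    obtain ⟨s, p, hps⟩ := exists_split x hx hx2
    have hm' : HasProjectiveDimensionLE
        (ModuleCat.of (R ⧸ Ideal.span {x}) (maximalIdeal (R ⧸ Ideal.span {x}))) n :=
      (Retract.mk (ModuleCat.ofHom s) (ModuleCat.ofHom p)
        (by rw [← ModuleCat.ofHom_comp, hps]; rfl)).hasProjectiveDimensionLT _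
    have hk' : HasProjectiveDimensionLE (ModuleCat.of (R ⧸ Ideal.span {x})
        ((R ⧸ Ideal.span {x}) ⧸ maximalIdeal (R ⧸ Ideal.span {x}))) (n + 1) := by
      let S : ShortComplex (ModuleCat.{u} (R ⧸ Ideal.span {x})) :=
        ModuleCat.shortComplexOfCompEqZero
        (maximalIdeal (R ⧸ Ideal.span {x})).subtype (maximalIdeal (R ⧸ Ideal.span {x})).mkQ
        (LinearMap.exact_subtype_mkQ _).linearMap_comp_eq_zero
      have hS : S.ShortExact :=
        { exact := ModuleCat.shortComplex_exact _ (LinearMap.exact_subtype_mkQ _)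
          mono_f := (ModuleCat.mono_iff_injective _).mpr (Submodule.injective_subtype _)
          epi_g := (ModuleCat.epi_iff_surjective _).mpr (Submodule.mkQ_surjective _) }
      exact (hS.hasProjectiveDimensionLT_X₃_iff n
        (inferInstanceAs (Projective (ModuleCat.of (R ⧸ Ideal.span {x}) _)))).mpr hm'
    obtain ⟨rs', hr, hspan⟩ := ih (R ⧸ Ideal.span {x}) (n + 1) hdim hk'
    obtain ⟨rs, rfl⟩ := (List.map_surjective_iff.mpr hsurj) rs'
    have hcomap : Ideal.ofList (x :: rs) = maximalIdeal R := by
      have h1 : Ideal.map (Ideal.Quotient.mk (Ideal.span {x})) (Ideal.ofList rs) =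
          maximalIdeal (R ⧸ Ideal.span {x}) := by
        rw [Ideal.map_ofList, ← hspan, ofList_eq_span]; rfl
      have hloc : IsLocalHom (Ideal.Quotient.mk (Ideal.span {x})) :=
        IsLocalHom.of_surjective _ hsurj
      have h2 := congrArg (Ideal.comap (Ideal.Quotient.mk (Ideal.span {x}))) h1
      have h3 : Ideal.comap (Ideal.Quotient.mk (Ideal.span {x}))
          (maximalIdeal (R ⧸ Ideal.span {x})) = maximalIdeal R :=
        (((local_hom_TFAE (Ideal.Quotient.mk (Ideal.span {x}))).out 0 4 :
          IsLocalHom (Ideal.Quotient.mk (Ideal.span {x})) ↔ _)).mp hloc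
      rw [Ideal.comap_map_of_surjective' (Ideal.Quotient.mk (Ideal.span {x}))
        Ideal.Quotient.mk_surjective, Ideal.mk_ker, h3] at h2
      rw [Ideal.ofList_cons, sup_comm, h2]
    refine ⟨x :: rs, ⟨?_, ?_⟩, hcomap⟩
    · refine IsWeaklyRegular.cons' hreg ?_
      have e : QuotSMulTop x R ≃ₗ[R ⧸ Ideal.span {x}] (R ⧸ Ideal.span {x}) :=
        LinearEquiv.extendScalarsOfSurjective hsurj
          (Submodule.quotEquivOfEq _ _ (by
            rw [← Submodule.ideal_span_singleton_smul]; simp))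
      exact (e.isWeaklyRegular_congr _).mpr hr.1
    · rw [hcomap, smul_eq_mul, Ideal.mul_top]
      exact (maximalIdeal.isMaximal R).ne_top.symm

end Helpers3


/-- Serre: Let `R` be a commutative Noetherian local ring with residue
field `k`.  Then `R` is regular (its maximal ideal is generated by a regular sequence)
if and only if `k` has finite projective dimension as an `R`-module (expressed by the
standard characterization: there is `n` with `Ext^i_R(k,M) = 0` for all `M` and `i > n`);
in particular, if `R` is regular then `k` is a perfect complex over `R`, i.e. `k` lies in
the thick subcategory of `D(R)` generated by `R`. -/
theorem regular_iff_residueField_finite_projective_dimension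
    (R : Type u) [CommRing R] [IsNoetherianRing R] [IsLocalRing R]
    [HasExt.{u} (ModuleCat.{u} R)]
    [HasDerivedCategory.{u} (ModuleCat.{u} R)] :
    ((∃ rs : List R, RingTheory.Sequence.IsRegular R rs ∧
        Ideal.span {x : R | x ∈ rs} = IsLocalRing.maximalIdeal R) ↔
      (∃ n : ℕ, ∀ (M : ModuleCat.{u} R) (i : ℕ), n < i →
        Subsingleton (Abelian.Ext
          (ModuleCat.of R (R ⧸ IsLocalRing.maximalIdeal R)) M i))) ∧
    ((∃ rs : List R, RingTheory.Sequence.IsRegular R rs ∧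
        Ideal.span {x : R | x ∈ rs} = IsLocalRing.maximalIdeal R) →
      IsThickBuilt
        ((DerivedCategory.singleFunctor (ModuleCat.{u} R) 0).obj (ModuleCat.of R R))
        ((DerivedCategory.singleFunctor (ModuleCat.{u} R) 0).obj
          (ModuleCat.of R (R ⧸ IsLocalRing.maximalIdeal R)))) := by
  refine ⟨⟨?_, ?_⟩, ?_⟩
  · rintro ⟨rs, reg, h⟩
    have := fwd rs reg h
    exact ⟨rs.length, fun M i hi => HasProjectiveDimensionLT.subsingleton _ (rs.length + 1) i hi M⟩
  · rintro ⟨n, h⟩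
    have hpd : HasProjectiveDimensionLE (ModuleCat.of R (R ⧸ IsLocalRing.maximalIdeal R)) n :=
      HasProjectiveDimensionLT.mk fun i hi Y e => (h Y i hi).elim _ _
    have hlt : ∃ d : ℕ, ringKrullDim R < d := by
      have h1 : ringKrullDim R ≠ ⊤ := ringKrullDim_ne_top
      have h2 : ringKrullDim R ≠ ⊥ := ringKrullDim_ne_bot
      obtain ⟨e, he⟩ := WithBot.ne_bot_iff_exists.mp h2
      rw [← he] at h1 ⊢
      have h3 : e ≠ ⊤ := fun h => h1 (by rw [h]; rfl)
      obtain ⟨d, rfl⟩ := ENat.ne_top_iff_exists.mp h3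
      exact ⟨d + 1, by exact_mod_cast Nat.lt_succ_self d⟩
    obtain ⟨d, hd⟩ := hlt
    exact bwd d R n hd hpd
  · rintro ⟨rs, reg, h⟩
    obtain ⟨e⟩ := quot_equiv rs _ h
    exact IsThickBuilt.of_iso ((DerivedCategory.singleFunctor (ModuleCat.{u} R) 0).mapIso e)
      (thick_quot _ rs (ModuleCat.of R R) reg.1 IsThickBuilt.base)
end
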